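/- arXiv:1605.03686 — 4 statements merged into one kernel-verified Lean document; each statement's English description precedes it below -/
import Mathlib

section
/- Let H and P be bounded self-adjoint operators on a complex Hilbert space 𝓗, and let K : 𝓗 → 𝓗 be a conjugate-linear (antilinear) isometric bijection with K ∘ K = id, satisfying K ∘ H = H ∘ K and K ∘ P = −P ∘ K. Then for every real number v, the spectrum of the operator H − v·P equals the spectrum of H + v·P. -/
/-!
Write `A = H - v • P` and `B = H + v • P`. Both are self-adjoint, so their spectra are real, and the
hypotheses on `K` give `K ∘ A = B ∘ K`. For real `z` the conjugate-linearity of `K` is harmless: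
`z - A = K ∘ (z - B) ∘ K`. Since `K` is a bijection and, by the open mapping theorem, a bounded
operator on a Hilbert space is invertible as soon as it is bijective, `z - A` is invertible whenever
`z - B` is. The relation is symmetric in `A` and `B`, as `K ∘ B = A ∘ K`.
-/

/-- Self-adjointness of `A` makes its spectrum real; for a spectral value that is not real,
conjugate-linearity of `K` would only give membership of its conjugate in the spectrum of `B`. -/
lemma spectrum_subset_of_conj_intertwine
    {𝓗 : Type*} [NormedAddCommGroup 𝓗] [InnerProductSpace ℂ 𝓗] [CompleteSpace 𝓗]
    {A B : 𝓗 →L[ℂ] 𝓗} (hA : IsSelfAdjoint A) {K : 𝓗 → 𝓗}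
    (hKadd : ∀ x y : 𝓗, K (x + y) = K x + K y)
    (hKsmul : ∀ (c : ℂ) (x : 𝓗), K (c • x) = (starRingEnd ℂ) c • K x)
    (hKinv : ∀ x : 𝓗, K (K x) = x)
    (hAB : ∀ x : 𝓗, K (A x) = B (K x)) :
    spectrum ℂ A ⊆ spectrum ℂ B := by
  intro z hz
  have hconj : (starRingEnd ℂ) z = z :=
    Complex.conj_eq_iff_im.mpr (hA.im_eq_zero_of_mem_spectrum hz)
  contrapose hz
  rw [spectrum.notMem_iff, ContinuousLinearMap.isUnit_iff_bijective] at hz ⊢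
  have hK : Function.Bijective K := Function.Involutive.bijective hKinv
  have hKneg : ∀ x, K (-x) = -K x := fun x => by simpa using hKsmul (-1) x
  have hcomp : ⇑(algebraMap ℂ (𝓗 →L[ℂ] 𝓗) z - A)
      = K ∘ ⇑(algebraMap ℂ (𝓗 →L[ℂ] 𝓗) z - B) ∘ K := by
    funext x
    simp [Algebra.algebraMap_eq_smul_one, sub_eq_add_neg, hKadd, hKneg, hKsmul, hconj, hKinv,
      ← hAB]
  rw [hcomp]
  exact hK.comp (hz.comp hK)

/-- If `H` and `P` are bounded self-adjoint operators on a complex Hilbert space and `K` is a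
conjugate-linear isometric involution commuting with `H` and anticommuting with `P`, then
`H - v•P` and `H + v•P` have the same spectrum for every real `v`. -/
theorem spectrum_sub_smul_eq_spectrum_add_smul
    {𝓗 : Type*} [NormedAddCommGroup 𝓗] [InnerProductSpace ℂ 𝓗] [CompleteSpace 𝓗]
    (H P : 𝓗 →L[ℂ] 𝓗) (hH : IsSelfAdjoint H) (hP : IsSelfAdjoint P)
    (K : 𝓗 → 𝓗)
    (hKadd : ∀ x y : 𝓗, K (x + y) = K x + K y)
    (hKsmul : ∀ (c : ℂ) (x : 𝓗), K (c • x) = (starRingEnd ℂ) c • K x)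
    (hKiso : ∀ x : 𝓗, ‖K x‖ = ‖x‖)
    (hKinv : ∀ x : 𝓗, K (K x) = x)
    (hKH : ∀ x : 𝓗, K (H x) = H (K x))
    (hKP : ∀ x : 𝓗, K (P x) = -P (K x)) :
    ∀ v : ℝ, spectrum ℂ (H - (v : ℂ) • P) = spectrum ℂ (H + (v : ℂ) • P) := by
  intro v
  have hvP : IsSelfAdjoint ((v : ℂ) • P) := IsSelfAdjoint.smul (Complex.conj_ofReal v) hP
  have hKneg : ∀ x, K (-x) = -K x := fun x => by simpa using hKsmul (-1) x
  apply Set.Subset.antisymm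
  · refine spectrum_subset_of_conj_intertwine (hH.sub hvP) hKadd hKsmul hKinv fun x => ?_
    simp [sub_eq_add_neg, hKadd, hKneg, hKsmul, hKH, hKP, -Complex.coe_smul]
  · refine spectrum_subset_of_conj_intertwine (hH.add hvP) hKadd hKsmul hKinv fun x => ?_
    simp [sub_eq_add_neg, hKadd, hKsmul, hKH, hKP, -Complex.coe_smul]
end

section
/- Let s > 1 be a real number, ε > 0 and a > 0. Then ∫_ℝ e^{iaξ} (ξ − iε)^{−s} dξ = (2π / Γ(s)) · a^{s−1} · e^{−aε} · e^{iπs/2}, where (ξ − iε)^{−s} denotes the principal branch of the complex power and Γ is the Gamma function. -/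
open Complex Real

/-!
The function `ξ ↦ Γ(s) (ε + iξ)^{-s}` is, up to the normalisation `ξ = 2πw`, the Fourier transform
of the Gamma density `g(x) = x^{s-1} e^{-εx} 𝟙_{x > 0}`. Both are integrable because `s > 1` and
`ε > 0`, and `g` is continuous at `a > 0`, so Fourier inversion evaluates the integral of
`e^{iaξ} (ε + iξ)^{-s}` as `2π g(a) / Γ(s)`. The statement follows because `ξ - iε` has argument in
`(-π, 0)`: multiplying it by `i` shifts the principal logarithm by exactly `iπ/2`, so that
`(ξ - iε)^{-s} = e^{iπs/2} (ε + iξ)^{-s}`.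

The Fourier transform of `g` is the Laplace transform `∫₀^∞ x^{s-1} e^{-zx} dx = Γ(s) z^{-s}`
(`laplace_rpow`) on the line `Re z = ε`. For real `z > 0` this is a scaling of Euler's integral;
both sides are holomorphic in `Re z > 0`, so the identity theorem extends it to the half-plane.
-/

namespace GammaFourier

open MeasureTheory Set Filter Topology FourierTransform

lemma norm_cpow_mul_exp {s x : ℝ} (hx : 0 < x) (z : ℂ) :
    ‖(x : ℂ) ^ (s : ℂ) * Complex.exp (-(z * x))‖ = x ^ s * Real.exp (-z.re * x) := by
  rw [norm_mul, Complex.norm_exp, Complex.norm_cpow_real, Complex.norm_real,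
    Real.norm_of_nonneg hx.le]
  simp

lemma aestronglyMeasurable_integrand (s : ℝ) (z : ℂ) :
    AEStronglyMeasurable (fun x : ℝ => (x : ℂ) ^ (s : ℂ) * Complex.exp (-(z * x)))
      (volume.restrict (Ioi 0)) := by
  refine ContinuousOn.aestronglyMeasurable ?_ measurableSet_Ioi
  intro x hx
  refine ContinuousAt.continuousWithinAt (ContinuousAt.mul ?_ (by fun_prop))
  exact (continuousAt_cpow_const (Or.inl (by simpa using hx))).comp
    Complex.continuous_ofReal.continuousAt

lemma integrableOn_rpow_mul_exp {s b : ℝ} (hs : -1 < s) (hb : 0 < b) :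
    IntegrableOn (fun x : ℝ => x ^ s * Real.exp (-b * x)) (Ioi 0) := by
  simpa using integrableOn_rpow_mul_exp_neg_mul_rpow hs one_pos hb

lemma integrableOn_integrand {s : ℝ} (hs : -1 < s) {z : ℂ} (hz : 0 < z.re) :
    IntegrableOn (fun x : ℝ => (x : ℂ) ^ (s : ℂ) * Complex.exp (-(z * x))) (Ioi 0) := by
  refine (integrableOn_rpow_mul_exp hs hz).mono' (aestronglyMeasurable_integrand s z) ?_
  filter_upwards [ae_restrict_mem measurableSet_Ioi] with x hx
  exact (norm_cpow_mul_exp hx z).le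

/-- The Laplace transform of a power is holomorphic in the right half-plane. -/
lemma differentiableAt_laplace {s : ℝ} (hs : -1 < s) {z : ℂ} (hz : 0 < z.re) :
    DifferentiableAt ℂ
      (fun z : ℂ => ∫ x in Ioi (0 : ℝ), (x : ℂ) ^ (s : ℂ) * Complex.exp (-(z * x))) z := by
  -- On `Re w > Re z / 2` the derivative of the integrand is dominated by
  -- `x ^ (s + 1) e^{-x Re z / 2}`.
  have hU : {w : ℂ | z.re / 2 < w.re} ∈ 𝓝 z :=
    (isOpen_lt continuous_const Complex.continuous_re).mem_nhds (by simp; linarith)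
  have hpow : ∀ x : ℝ, 0 < x → (x : ℂ) ^ ((s + 1 : ℝ) : ℂ) = (x : ℂ) ^ (s : ℂ) * x := by
    intro x hx
    rw [Complex.ofReal_add, Complex.ofReal_one, Complex.cpow_add _ _ (by exact_mod_cast hx.ne'),
      Complex.cpow_one]
  refine (hasDerivAt_integral_of_dominated_loc_of_deriv_le
    (F' := fun w x => -((x : ℂ) ^ ((s + 1 : ℝ) : ℂ) * Complex.exp (-(w * x))))
    (bound := fun x => x ^ (s + 1) * Real.exp (-(z.re / 2) * x)) hU
    (Eventually.of_forall fun w => aestronglyMeasurable_integrand s w)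
    (integrableOn_integrand hs hz) (aestronglyMeasurable_integrand (s + 1) z).neg ?_
    (integrableOn_rpow_mul_exp (by linarith) (by linarith)) ?_).2.differentiableAt
  · filter_upwards [ae_restrict_mem measurableSet_Ioi] with x hx w hw
    rw [norm_neg, norm_cpow_mul_exp hx]
    have hx' : (0 : ℝ) < x := hx
    have hw' : z.re / 2 < w.re := hw
    gcongr
  · filter_upwards [ae_restrict_mem measurableSet_Ioi] with x hx w _
    have h1 : HasDerivAt (fun w : ℂ => -(w * x)) (-(1 * (x : ℂ))) w :=
      ((hasDerivAt_id w).mul_const (x : ℂ)).neg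
    refine (h1.cexp.const_mul ((x : ℂ) ^ (s : ℂ))).congr_deriv ?_
    rw [hpow x hx]
    ring

lemma laplace_rpow {s : ℝ} (hs : 0 < s) {z : ℂ} (hz : 0 < z.re) :
    ∫ x in Ioi (0 : ℝ), (x : ℂ) ^ ((s - 1 : ℝ) : ℂ) * Complex.exp (-(z * x)) =
      Complex.Gamma s * z ^ (-(s : ℂ)) := by
  have hopen : IsOpen {w : ℂ | 0 < w.re} := isOpen_lt continuous_const Complex.continuous_re
  have hL : AnalyticOnNhd ℂ (fun z : ℂ => ∫ x in Ioi (0 : ℝ),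
      (x : ℂ) ^ ((s - 1 : ℝ) : ℂ) * Complex.exp (-(z * x))) {w : ℂ | 0 < w.re} :=
    DifferentiableOn.analyticOnNhd
      (fun w hw => (differentiableAt_laplace (by linarith) hw).differentiableWithinAt) hopen
  have hR : AnalyticOnNhd ℂ (fun z : ℂ => Complex.Gamma s * z ^ (-(s : ℂ))) {w : ℂ | 0 < w.re} :=
    DifferentiableOn.analyticOnNhd
      (fun w hw => (((differentiableAt_id).cpow_const (Or.inl hw)).const_mul
        _).differentiableWithinAt) hopen
  refine hL.eqOn_of_preconnected_of_frequently_eq hR (convex_halfSpace_re_gt 0).isPreconnected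
    (z₀ := 1) (by simp) ?_ hz
  -- The positive reals accumulate at `1`.
  have hlim : Tendsto (fun r : ℝ => (r : ℂ)) (𝓝[>] 1) (𝓝[≠] 1) := by
    refine tendsto_nhdsWithin_iff.2 ⟨?_, ?_⟩
    · exact (Complex.continuous_ofReal.tendsto' 1 1 (by simp)).mono_left nhdsWithin_le_nhds
    · filter_upwards [self_mem_nhdsWithin] with r hr
      have : (1 : ℝ) < r := hr
      simpa using this.ne'
  refine hlim.frequently (Eventually.frequently ?_)
  filter_upwards [self_mem_nhdsWithin] with r hr
  have hr0 : (0 : ℝ) < r := lt_trans one_pos hr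
  have h := Complex.integral_cpow_mul_exp_neg_mul_Ioi (a := s) (by simpa using hs) hr0
  push_cast
  rw [h, one_div, Complex.cpow_neg, Complex.inv_cpow, mul_comm]
  rw [Complex.arg_ofReal_of_nonneg hr0.le]
  exact Real.pi_pos.ne

/-- The Gamma density `x^{s-1} e^{-εx}` on `x > 0`, extended by zero and not normalised. -/
noncomputable def density (s ε : ℝ) : ℝ → ℂ :=
  (Ioi 0).indicator fun x => (x : ℂ) ^ ((s - 1 : ℝ) : ℂ) * Complex.exp (-((ε : ℂ) * x))

lemma fourier_density {s ε : ℝ} (hs : 0 < s) (hε : 0 < ε) (w : ℝ) :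
    𝓕 (density s ε) w =
      Complex.Gamma s * ((ε : ℂ) + Complex.I * (2 * π * w : ℝ)) ^ (-(s : ℂ)) := by
  rw [← laplace_rpow hs (by simpa using hε), Real.fourier_real_eq_integral_exp_smul,
    ← integral_indicator measurableSet_Ioi]
  congr 1 with x
  by_cases hx : x ∈ Ioi (0 : ℝ)
  · simp only [density, indicator_of_mem hx, smul_eq_mul]
    rw [mul_left_comm, ← Complex.exp_add]
    congr 2
    push_cast
    ring
  · simp [density, indicator_of_notMem hx]

/-- Since `|ε + iξ| ≥ c (1 + |ξ|)` with `c = min ε 1 / 2`, the exponent `s > 1` gives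
integrability. -/
lemma integrable_cpow {s ε : ℝ} (hs : 1 < s) (hε : 0 < ε) :
    Integrable fun ξ : ℝ => ((ε : ℂ) + Complex.I * ξ) ^ (-(s : ℂ)) := by
  set c : ℝ := min ε 1 / 2 with hc
  have hc0 : 0 < c := by positivity
  have hc1 : 2 * c ≤ ε := by rw [hc]; linarith [min_le_left ε 1]
  have hc2 : 2 * c ≤ 1 := by rw [hc]; linarith [min_le_right ε 1]
  have hint : Integrable fun ξ : ℝ => (1 + ‖ξ‖) ^ (-s) :=
    integrable_one_add_norm (by simpa using hs)
  refine (hint.const_mul (c ^ (-s))).mono' ?_ (Eventually.of_forall fun ξ => ?_)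
  · refine Continuous.aestronglyMeasurable (Continuous.cpow (by fun_prop) continuous_const ?_)
    intro ξ
    exact Or.inl (by simpa using hε)
  · have h1 : ε ≤ ‖(ε : ℂ) + Complex.I * ξ‖ := by
      simpa using (Complex.re_le_norm ((ε : ℂ) + Complex.I * ξ))
    have h2 : |ξ| ≤ ‖(ε : ℂ) + Complex.I * ξ‖ := by
      simpa using (Complex.abs_im_le_norm ((ε : ℂ) + Complex.I * ξ))
    rw [← Complex.ofReal_neg, Complex.norm_cpow_real,
      ← Real.mul_rpow hc0.le (by positivity), Real.norm_eq_abs]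
    refine Real.rpow_le_rpow_of_nonpos (by positivity) ?_ (by linarith)
    nlinarith [abs_nonneg ξ]

lemma integrable_density {s ε : ℝ} (hs : 0 < s) (hε : 0 < ε) : Integrable (density s ε) :=
  (integrable_indicator_iff measurableSet_Ioi).2
    (integrableOn_integrand (by linarith) (by simpa using hε))

lemma continuousAt_density {s ε a : ℝ} (ha : 0 < a) : ContinuousAt (density s ε) a := by
  have h : ContinuousAt
      (fun x : ℝ => (x : ℂ) ^ ((s - 1 : ℝ) : ℂ) * Complex.exp (-((ε : ℂ) * x))) a := by
    refine ContinuousAt.mul ?_ (by fun_prop)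
    exact (continuousAt_cpow_const (Or.inl (by simpa using ha))).comp
      Complex.continuous_ofReal.continuousAt
  refine h.congr ?_
  filter_upwards [Ioi_mem_nhds ha] with x hx
  simp only [density, indicator_of_mem hx]

lemma integral_exp_mul_cpow {s ε a : ℝ} (hs : 1 < s) (hε : 0 < ε) (ha : 0 < a) :
    ∫ ξ : ℝ, Complex.exp (Complex.I * a * ξ) * ((ε : ℂ) + Complex.I * ξ) ^ (-(s : ℂ)) =
      2 * π / Complex.Gamma s * density s ε a := by
  have hs0 : 0 < s := by linarith
  have hΓ : Complex.Gamma s ≠ 0 := Complex.Gamma_ne_zero_of_re_pos (by simpa using hs0)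
  have hF : 𝓕 (density s ε) = fun w : ℝ =>
      Complex.Gamma s * ((ε : ℂ) + Complex.I * (2 * π * w : ℝ)) ^ (-(s : ℂ)) :=
    funext (fourier_density hs0 hε)
  have hFint : Integrable (𝓕 (density s ε)) := by
    rw [hF]
    exact ((integrable_cpow hs hε).comp_mul_left' (R := 2 * π) (by positivity)).const_mul _
  have hinv := (integrable_density hs0 hε).fourierInv_fourier_eq hFint
    (continuousAt_density (s := s) (ε := ε) ha)
  have hsub := Measure.integral_comp_mul_left
    (fun ξ : ℝ => Complex.exp (Complex.I * a * ξ) * ((ε : ℂ) + Complex.I * ξ) ^ (-(s : ℂ))) (2 * π)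
  rw [Real.fourierInv_eq', hF] at hinv
  have hrw : ∀ w : ℝ, Complex.exp ((2 * π * inner ℝ w a : ℝ) * Complex.I) •
        (Complex.Gamma s * ((ε : ℂ) + Complex.I * (2 * π * w : ℝ)) ^ (-(s : ℂ))) =
      Complex.Gamma s * (Complex.exp (Complex.I * a * (2 * π * w : ℝ)) *
        ((ε : ℂ) + Complex.I * (2 * π * w : ℝ)) ^ (-(s : ℂ))) := by
    intro w
    rw [smul_eq_mul, mul_left_comm]
    congr 3
    simp
    ring
  simp_rw [hrw] at hinv
  rw [integral_const_mul, hsub, abs_of_pos (by positivity), Complex.real_smul] at hinv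
  have hπ : (π : ℂ) ≠ 0 := by exact_mod_cast Real.pi_pos.ne'
  rw [← hinv]
  push_cast
  field_simp

/-- The principal powers of `ξ - iε` and of `i (ξ - iε) = ε + iξ` differ by the constant phase
`e^{iπs/2}`: multiplication by `i` rotates the lower half-plane onto the right half-plane without
crossing the branch cut. -/
lemma sub_I_mul_cpow {s ε : ℝ} (hε : 0 < ε) (ξ : ℝ) :
    ((ξ : ℂ) - Complex.I * ε) ^ (-(s : ℂ)) =
      Complex.exp (Complex.I * π * s / 2) * ((ε : ℂ) + Complex.I * ξ) ^ (-(s : ℂ)) := by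
  set z : ℂ := (ξ : ℂ) - Complex.I * ε with hz
  have him : z.im < 0 := by simpa [hz] using hε
  have hz0 : z ≠ 0 := fun h => by simp [h] at him
  have hIz : (ε : ℂ) + Complex.I * ξ = Complex.I * z := by
    rw [hz]
    linear_combination (ε : ℂ) * Complex.I_sq
  have harg : z.arg < 0 := Complex.arg_neg_iff.2 him
  have hlog : Complex.log (Complex.I * z) = Complex.log Complex.I + Complex.log z := by
    refine (Complex.log_mul_eq_add_log_iff Complex.I_ne_zero hz0).2 ?_
    rw [Complex.arg_I]
    constructor <;> linarith [Complex.neg_pi_lt_arg z, Real.pi_pos]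
  rw [hIz, Complex.cpow_def_of_ne_zero hz0,
    Complex.cpow_def_of_ne_zero (mul_ne_zero Complex.I_ne_zero hz0), ← Complex.exp_add, hlog,
    Complex.log_I]
  congr 1
  ring

end GammaFourier

/-- Fourier transform of the principal-branch power `(ξ - iε)^{-s}`: for `s > 1`, `ε > 0` and
`a > 0`, `∫ e^{iaξ}(ξ - iε)^{-s} dξ = (2π/Γ(s)) a^{s-1} e^{-aε} e^{iπs/2}`. -/
theorem integral_exp_mul_cpow_pos
    (s ε a : ℝ) (hs : 1 < s) (hε : 0 < ε) (ha : 0 < a) :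
    ∫ ξ : ℝ, Complex.exp (Complex.I * a * ξ) * ((ξ : ℂ) - Complex.I * ε) ^ (-(s : ℂ)) =
      (2 * Real.pi / Complex.Gamma (s : ℂ)) * (a : ℂ) ^ ((s : ℂ) - 1) *
        Complex.exp (-(a * ε)) * Complex.exp (Complex.I * Real.pi * s / 2) := by
  simp_rw [GammaFourier.sub_I_mul_cpow hε, mul_left_comm (Complex.exp (Complex.I * a * _))]
  rw [MeasureTheory.integral_const_mul, GammaFourier.integral_exp_mul_cpow hs hε ha,
    GammaFourier.density, Set.indicator_of_mem (Set.mem_Ioi.2 ha)]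
  push_cast
  rw [mul_comm (ε : ℂ) a]
  ring
end

section
/- Let k > 0, ε > 0 and b ∈ ℝ. Then ∫_ℝ [ (x + b − iε)⁻² + (x − b + iε)⁻² ] e^{−ikx} dx = −2πk · e^{−ikb} · e^{−kε}. -/
/-!
Up to a translation (and a reflection), both terms of the integrand are
`-((ε + i y) ^ 2)⁻¹` times an exponential, so the claim reduces to
`∫ ((ε + i x) ^ 2)⁻¹ e ^ (i x t) dx = 2π max(t, 0) e ^ (-ε t)` for all real `t`
(`integral_inv_sq_mul_exp`).

This is Fourier inversion instead of a contour integral. The ramp `g t = max(t, 0) e ^ (-ε t)` is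
continuous and integrable, and its Fourier transform is `w ↦ ((ε + 2π i w) ^ 2)⁻¹`
(`fourier_ramp`), which is integrable too, so inversion recovers `g` at every point.
The second term of the integrand uses `t = k`; the first uses `t = -k < 0`, where `g` vanishes.
-/

open Complex Real
open MeasureTheory Set Filter Topology
open scoped FourierTransform

/-- The ramp `t ↦ max(t, 0) e ^ (-ε t)`, damped at rate `ε`. -/
noncomputable def ramp (ε t : ℝ) : ℂ := ((max t 0 : ℝ) : ℂ) * Complex.exp (-(ε * t))

lemma continuous_ramp (ε : ℝ) : Continuous (ramp ε) := by
  unfold ramp; fun_prop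

lemma ramp_eq_indicator (ε : ℝ) :
    ramp ε = (Ioi (0 : ℝ)).indicator (fun t : ℝ => (t : ℂ) * Complex.exp (-(ε * t))) := by
  ext t
  by_cases ht : 0 < t
  · simp [ramp, ht, ht.le]
  · simp [ramp, ht, not_lt.mp ht]

lemma integrableOn_mul_exp {a : ℂ} (ha : 0 < a.re) :
    IntegrableOn (fun t : ℝ => (t : ℂ) * Complex.exp (-(a * t))) (Ioi 0) := by
  have h := integrableOn_rpow_mul_exp_neg_mul_rpow (p := 1) (s := 1) (b := a.re)
    (by norm_num) one_pos ha
  refine Integrable.mono' h (Continuous.aestronglyMeasurable (by fun_prop)) ?_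
  filter_upwards [ae_restrict_mem measurableSet_Ioi] with t ht
  have ht : 0 < t := ht
  simp [Complex.norm_exp, abs_of_pos ht]

lemma integrable_ramp {ε : ℝ} (hε : 0 < ε) : Integrable (ramp ε) := by
  rw [ramp_eq_indicator, integrable_indicator_iff measurableSet_Ioi]
  exact integrableOn_mul_exp (by simpa using hε)

lemma integral_mul_exp {a : ℂ} (ha : 0 < a.re) :
    ∫ t in Ioi (0 : ℝ), (t : ℂ) * Complex.exp (-(a * t)) = (a ^ 2)⁻¹ := by
  have ha0 : a ≠ 0 := by rintro rfl; simp at ha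
  -- integration by parts gives this antiderivative
  have hd : ∀ t ∈ Ici (0 : ℝ), HasDerivAt
      (fun t : ℝ => -(((t : ℂ) / a + (a ^ 2)⁻¹) * Complex.exp (-(a * t))))
      ((t : ℂ) * Complex.exp (-(a * t))) t := by
    intro t _
    have h1 : HasDerivAt (fun t : ℝ => (t : ℂ)) 1 t := Complex.ofRealCLM.hasDerivAt
    convert! (((h1.div_const a).add_const ((a ^ 2)⁻¹)).mul ((h1.const_mul a).neg.cexp)).neg using 1
    simp only [Pi.neg_apply]
    field_simp
    ring
  have hE : Tendsto (fun t : ℝ => Complex.exp (-(a * t))) atTop (𝓝 0) := by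
    rw [tendsto_zero_iff_norm_tendsto_zero]
    have := tendsto_rpow_mul_exp_neg_mul_atTop_nhds_zero 0 a.re ha
    simpa [Complex.norm_exp] using this
  have htE : Tendsto (fun t : ℝ => (t : ℂ) * Complex.exp (-(a * t))) atTop (𝓝 0) := by
    rw [tendsto_zero_iff_norm_tendsto_zero]
    have := tendsto_rpow_mul_exp_neg_mul_atTop_nhds_zero 1 a.re ha
    refine this.congr' ?_
    filter_upwards [eventually_gt_atTop 0] with t ht
    simp [Complex.norm_exp, abs_of_pos ht]
  have hlim : Tendsto (fun t : ℝ => -(((t : ℂ) / a + (a ^ 2)⁻¹) * Complex.exp (-(a * t))))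
      atTop (𝓝 0) := by
    have := ((htE.const_mul a⁻¹).add (hE.const_mul (a ^ 2)⁻¹)).neg
    simp only [mul_zero, add_zero, neg_zero] at this
    refine this.congr fun t => ?_
    ring
  rw [integral_Ioi_of_hasDerivAt_of_tendsto' hd (integrableOn_mul_exp ha) hlim]
  simp

lemma fourier_ramp {ε : ℝ} (hε : 0 < ε) (w : ℝ) :
    𝓕 (ramp ε) w = (((ε : ℂ) + Complex.I * (2 * π * w : ℝ)) ^ 2)⁻¹ := by
  rw [← integral_mul_exp (a := (ε : ℂ) + Complex.I * (2 * π * w : ℝ)) (by simpa using hε),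
    Real.fourier_eq', ← integral_indicator measurableSet_Ioi, ramp_eq_indicator]
  congr 1 with t
  by_cases ht : t ∈ Ioi (0 : ℝ)
  · rw [indicator_of_mem ht, indicator_of_mem ht, smul_eq_mul, mul_left_comm, ← Complex.exp_add]
    congr 2
    simp
    ring
  · rw [indicator_of_notMem ht, indicator_of_notMem ht, smul_zero]

lemma integrable_inv_sq {ε : ℝ} (hε : 0 < ε) :
    Integrable (fun x : ℝ => (((ε : ℂ) + Complex.I * x) ^ 2)⁻¹) := by
  have h := (integrable_inv_one_add_sq.comp_div hε.ne').const_mul ((ε ^ 2)⁻¹)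
  refine h.mono' ?_ (ae_of_all _ fun x => le_of_eq ?_)
  · refine Measurable.aestronglyMeasurable ?_
    fun_prop
  · rw [norm_inv, norm_pow, ← Complex.normSq_eq_norm_sq, ← mul_inv]
    congr 1
    simp [Complex.normSq_apply]
    field_simp

lemma integrable_inv_sq_mul_exp {ε : ℝ} (hε : 0 < ε) (t : ℝ) :
    Integrable (fun x : ℝ =>
      (((ε : ℂ) + Complex.I * x) ^ 2)⁻¹ * Complex.exp (Complex.I * x * t)) := by
  refine (integrable_inv_sq hε).mul_bdd (c := 1)
    (Continuous.aestronglyMeasurable (by fun_prop)) (ae_of_all _ fun x => ?_)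
  simp [Complex.norm_exp]

lemma integral_inv_sq_mul_exp {ε : ℝ} (hε : 0 < ε) (t : ℝ) :
    ∫ x : ℝ, (((ε : ℂ) + Complex.I * x) ^ 2)⁻¹ * Complex.exp (Complex.I * x * t) =
      2 * π * ramp ε t := by
  have hF : 𝓕 (ramp ε) = fun w : ℝ => (((ε : ℂ) + Complex.I * (2 * π * w : ℝ)) ^ 2)⁻¹ :=
    funext (fourier_ramp hε)
  have hint : Integrable (𝓕 (ramp ε)) := by
    rw [hF]
    exact (integrable_inv_sq hε).comp_mul_left' (by positivity : (2 * π) ≠ 0)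
  have hinv := congrFun
    ((continuous_ramp ε).fourierInv_fourier_eq (integrable_ramp hε) hint) t
  rw [Real.fourierInv_eq', hF] at hinv
  -- rescale the frequency by `x = 2π w`
  have hs := Measure.integral_comp_mul_left (fun x : ℝ =>
    (((ε : ℂ) + Complex.I * x) ^ 2)⁻¹ * Complex.exp (Complex.I * x * t)) (2 * π)
  have he : ∀ w : ℝ, Complex.exp (((2 * π * inner ℝ w t : ℝ) : ℂ) * Complex.I) •
      (((ε : ℂ) + Complex.I * (2 * π * w : ℝ)) ^ 2)⁻¹ =
      (((ε : ℂ) + Complex.I * (2 * π * w : ℝ)) ^ 2)⁻¹ *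
        Complex.exp (Complex.I * (2 * π * w : ℝ) * t) := by
    intro w
    rw [smul_eq_mul, mul_comm]
    congr 2
    simp
    ring
  simp_rw [he] at hinv
  rw [hinv, abs_of_pos (by positivity)] at hs
  rw [hs, Complex.real_smul, ← mul_assoc]
  push_cast
  rw [mul_inv_cancel₀ (by simp [Real.pi_ne_zero]), one_mul]

/-- The `x`-integral in the Fourier transform of the Tomonaga–Luttinger density–density
correlation: for `k > 0`, `ε > 0` and `b ∈ ℝ`,
`∫ [(x + b - iε)⁻² + (x - b + iε)⁻²] e^{-ikx} dx = -2πk e^{-ikb} e^{-kε}`. -/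
theorem integral_sum_inv_sq_mul_exp
    (k ε b : ℝ) (hk : 0 < k) (hε : 0 < ε) :
    ∫ x : ℝ,
        ((((x : ℂ) + b - Complex.I * ε) ^ 2)⁻¹ + (((x : ℂ) - b + Complex.I * ε) ^ 2)⁻¹) *
          Complex.exp (-Complex.I * k * x) =
      -2 * Real.pi * k * Complex.exp (-Complex.I * k * b) * Complex.exp (-(k * ε)) := by
  set G : ℝ → ℝ → ℂ := fun t x =>
    (((ε : ℂ) + Complex.I * x) ^ 2)⁻¹ * Complex.exp (Complex.I * x * t) with hG
  have hGi : ∀ t, Integrable (G t) := integrable_inv_sq_mul_exp hε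
  -- `x + b - iε = -i (ε + i (x + b))` and `x - b + iε = i (ε + i (b - x))`
  have hsplit : ∀ x : ℝ,
      ((((x : ℂ) + b - Complex.I * ε) ^ 2)⁻¹ + (((x : ℂ) - b + Complex.I * ε) ^ 2)⁻¹) *
          Complex.exp (-Complex.I * k * x) =
      -Complex.exp (Complex.I * k * b) * G (-k) (x + b) +
        -Complex.exp (-Complex.I * k * b) * G k (b - x) := by
    intro x
    have h1 : ((x : ℂ) + b - Complex.I * ε) ^ 2 =
        -((ε : ℂ) + Complex.I * (x + b : ℝ)) ^ 2 := by
      push_cast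
      linear_combination ((ε : ℂ) ^ 2 + (x + b) ^ 2) * Complex.I_sq
    have h2 : ((x : ℂ) - b + Complex.I * ε) ^ 2 =
        -((ε : ℂ) + Complex.I * (b - x : ℝ)) ^ 2 := by
      push_cast
      linear_combination ((ε : ℂ) ^ 2 + (x - b) ^ 2) * Complex.I_sq
    have e1 : Complex.exp (-Complex.I * k * x) = Complex.exp (Complex.I * k * b) *
        Complex.exp (Complex.I * (x + b : ℝ) * (-k : ℝ)) := by
      rw [← Complex.exp_add]; congr 1; push_cast; ring
    have e2 : Complex.exp (-Complex.I * k * x) = Complex.exp (-Complex.I * k * b) *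
        Complex.exp (Complex.I * (b - x : ℝ) * k) := by
      rw [← Complex.exp_add]; congr 1; push_cast; ring
    rw [h1, h2, inv_neg, inv_neg, add_mul]
    congr 1
    · rw [e1]; simp only [hG]; ring
    · rw [e2]; simp only [hG]; ring
  simp_rw [hsplit]
  rw [integral_add (((hGi (-k)).comp_add_right b).const_mul _)
      (((hGi k).comp_sub_left b).const_mul _), integral_const_mul, integral_const_mul,
    integral_add_right_eq_self (G (-k)) b, integral_sub_left_eq_self (G k) volume b,
    integral_inv_sq_mul_exp hε, integral_inv_sq_mul_exp hε]
  simp only [ramp, max_eq_left hk.le, max_eq_right (neg_nonpos.mpr hk.le)]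
  rw [mul_comm (ε : ℂ) (k : ℂ)]
  push_cast
  ring
end

section
/- Let N ≥ 1 and let H₀, U, P be N×N Hermitian complex matrices with H₀P = PH₀. Suppose the smallest eigenvalue E₀ of H₀ is simple, with unit eigenvector Ω₀ satisfying PΩ₀ = 0, and let (Ωₙ)_{n=0}^{N−1} be an orthonormal eigenbasis of H₀ with eigenvalues E₀ < E₁ ≤ … ≤ E_{N−1} and Ω₀ the ground eigenvector. For κ, v ∈ ℝ let λ(κ, v) denote the smallest eigenvalue of H₀ + κU − vP. Then there exists δ > 0 such that for every |κ| < δ the function v ↦ λ(κ, v) is twice differentiable at v = 0, and as κ → 0, (1/2) (∂²/∂v²) λ(κ, v)|_{v=0} = −κ² Σ_{n=1}^{N−1} |⟨Ωₙ, (UP − PU) Ω₀⟩|² / (Eₙ − E₀)³ + O(κ³). -/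
open scoped InnerProductSpace
open Asymptotics Filter
open scoped Topology ContDiff

/-!
The proof is a Feshbach–Schur reduction onto the ground state `e = Ω₀`, followed by the implicit
function theorem.

Write `H = H₀ + κU - vP`, `Π` for the projection onto `ℂe`, `Q = 1 - Π`, `u = ⟪e, Ue⟫` and
`w = QUe`. Since `H₀e = E₀e` and `Pe = 0`, one has `He = (E₀ + κu)e + κw`. On the range of `Q` the
form of `H₀ - E₀` is bounded below by the spectral gap `c > 0`, so for `(κ, v, μ)` near
`(0, 0, E₀)` the operator `D = Q(H - μ)Q + Π` is invertible and `Q(H - μ)Q` is positive on the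
range of `Q`. For such parameters, a solution `μ` of the scalar equation
`μ = E₀ + κu - κ² G(κ, v, μ)`, with `G(κ, v, μ) = re ⟪w, D⁻¹w⟫`, is the lowest eigenvalue of `H`
(`ground_energy_of_fixed_point`): the vector `e - κD⁻¹w` is an eigenvector, and `H - μ ≥ 0`
because modulo this null vector every vector lies in the range of `Q`.

Substituting `μ = E₀ + κu - κ²g`, the implicit function theorem gives a `C³` function `g(κ, v)`
with `λ(κ, v) = E₀ + κu - κ² g(κ, v)`. Hence `½∂ᵥ²λ(κ, 0) = -κ² ½∂ᵥ²g(κ, 0)`, and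
`∂ᵥ²g(κ, 0) = ∂ᵥ²g(0, 0) + O(κ)` (`second_derivative_expansion`). Because of the factor `κ²` in
front, only the value at `κ = 0` is needed, where `g(0, v) = G(0, v, E₀)` is explicit: with
`R = D(0, 0, E₀)⁻¹` its second derivative is `2 re ⟪w, RPRPRw⟫` (`operator_expansion`). Finally
`R` commutes with `P`, so `RPRPR = PR³P`, and expanding in the eigenbasis gives
`∑ |⟪Ωₙ, Pw⟫|² / (Eₙ - E₀)³` (`inner_resolvent_cubed`), where `Pw = PUe = -(UP - PU)e`.
-/

/-! ### The scalar fixed-point equation -/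

/-- The fixed-point equation `μ = E₀ + κu - κ² G(κ, v, μ)` in the unknown `g = G(κ, v, μ)`: the
factor `κ²` makes the partial derivative of `g - G` in `g` equal to `1` at the base point, so the
implicit function theorem always applies. -/
theorem exists_implicit_energy {G : ℝ × ℝ × ℝ → ℝ} {E₀ : ℝ} (u : ℝ)
    (hG : ContDiffAt ℝ 3 G (0, 0, E₀)) :
    ∃ g : ℝ × ℝ → ℝ, ContDiffAt ℝ 3 g (0, 0) ∧
      ∀ᶠ p in 𝓝 ((0 : ℝ), (0 : ℝ)), g p = G (p.1, p.2, E₀ + p.1 * u - p.1 ^ 2 * g p) := by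
  set F : (ℝ × ℝ) × ℝ → ℝ :=
    fun z => z.2 - G (z.1.1, z.1.2, E₀ + z.1.1 * u - z.1.1 ^ 2 * z.2) with hF
  set z₀ : (ℝ × ℝ) × ℝ := ((0, 0), G (0, 0, E₀)) with hz₀
  have hF0 : F z₀ = 0 := by simp [hF, hz₀]
  have hFc : ContDiffAt ℝ 3 F z₀ := by
    refine contDiffAt_snd.sub (ContDiffAt.comp z₀ (g := G) ?_ ?_)
    · simpa [hz₀] using hG
    · fun_prop
  have hd : DifferentiableAt ℝ F z₀ := hFc.differentiableAt (by norm_num)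
  have hinr : fderiv ℝ F z₀ ∘L .inr ℝ (ℝ × ℝ) ℝ = .id ℝ ℝ := by
    have h1 : HasFDerivAt (fun y : ℝ => F ((0, 0), y))
        (fderiv ℝ F z₀ ∘L .inr ℝ (ℝ × ℝ) ℝ) (G (0, 0, E₀)) :=
      HasFDerivAt.comp (g := F) _ hd.hasFDerivAt (hasFDerivAt_prodMk_right (0, 0) _)
    have h2 : HasFDerivAt (fun y : ℝ => F ((0, 0), y)) (.id ℝ ℝ) (G (0, 0, E₀)) := by
      simpa [hF] using (hasFDerivAt_id (𝕜 := ℝ) (G (0, 0, E₀))).sub_const (G (0, 0, E₀))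
    exact h1.unique h2
  have hinv : (fderiv ℝ F z₀ ∘L .inr ℝ (ℝ × ℝ) ℝ).IsInvertible := by
    rw [hinr]; exact ⟨.refl ℝ ℝ, rfl⟩
  refine ⟨hFc.implicitFunction (by norm_num) hinv,
    hFc.contDiffAt_implicitFunction (by norm_num) hinv, ?_⟩
  filter_upwards [hFc.eventually_apply_implicitFunction (by norm_num) hinv] with p hp
  rw [hF0] at hp
  simpa [hF] using sub_eq_zero.1 hp

theorem ContDiffAt.fderiv_apply_snd {g : ℝ × ℝ → ℝ} {p : ℝ × ℝ} {m n : ℕ∞ω}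
    (hg : ContDiffAt ℝ n g p) (hmn : m + 1 ≤ n) :
    ContDiffAt ℝ m (fun q => fderiv ℝ g q (0, 1)) p :=
  (hg.fderiv_right hmn).clm_apply contDiffAt_const

theorem DifferentiableAt.hasDerivAt_slice {g : ℝ × ℝ → ℝ} {κ v : ℝ}
    (hg : DifferentiableAt ℝ g (κ, v)) :
    HasDerivAt (fun v => g (κ, v)) (fderiv ℝ g (κ, v) (0, 1)) v :=
  hg.hasFDerivAt.comp_hasDerivAt v ((hasDerivAt_const v κ).prodMk (hasDerivAt_id v))

/-- If `lam` is given near the origin by the fixed-point equation, then its second `v`-derivative at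
`v = 0` is determined to order `κ²` by the second derivative `2c` of `v ↦ G (0, v, E₀)`. -/
theorem second_derivative_expansion {G : ℝ × ℝ × ℝ → ℝ} {E₀ u c : ℝ} {k : ℝ → ℝ}
    {lam : ℝ → ℝ → ℝ}
    (hG : ContDiffAt ℝ 3 G (0, 0, E₀))
    (hk : ∀ᶠ v in 𝓝 (0 : ℝ), HasDerivAt (fun v => G (0, v, E₀)) (k v) v)
    (hk' : HasDerivAt k (2 * c) 0)
    (hlam : ∀ᶠ q in 𝓝 ((0 : ℝ), (0 : ℝ), E₀),
      q.2.2 = E₀ + q.1 * u - q.1 ^ 2 * G q → lam q.1 q.2.1 = q.2.2) :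
    ∃ δ > 0,
      (∀ κ : ℝ, |κ| < δ →
        DifferentiableAt ℝ (fun v => lam κ v) 0 ∧
        DifferentiableAt ℝ (deriv (fun v => lam κ v)) 0) ∧
      (fun κ : ℝ => (1 / 2) * deriv (deriv (fun v => lam κ v)) 0 + κ ^ 2 * c)
        =O[𝓝 0] (fun κ : ℝ => κ ^ 3) := by
  obtain ⟨g, hg, hfix⟩ := exists_implicit_energy u hG
  set g₁ : ℝ × ℝ → ℝ := fun q => fderiv ℝ g q (0, 1) with hg₁
  set g₂ : ℝ × ℝ → ℝ := fun q => fderiv ℝ g₁ q (0, 1) with hg₂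
  have hg₁c : ContDiffAt ℝ 2 g₁ (0, 0) := hg.fderiv_apply_snd (by norm_num)
  have hg₂c : ContDiffAt ℝ 1 g₂ (0, 0) := hg₁c.fderiv_apply_snd (by norm_num)
  have hdiff : ∀ᶠ p in 𝓝 ((0 : ℝ), (0 : ℝ)), DifferentiableAt ℝ g p :=
    (hg.eventually (by norm_num)).mono fun p hp => hp.differentiableAt (by norm_num)
  have hslice : Tendsto (fun v : ℝ => ((0 : ℝ), v)) (𝓝 0) (𝓝 (0, 0)) :=
    Continuous.tendsto' (by fun_prop) _ _ rfl
  -- On the line `κ = 0` the implicit function is `G (0, ·, E₀)`.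
  have hg₂0 : g₂ (0, 0) = 2 * c := by
    have hgG : (fun v => g (0, v)) =ᶠ[𝓝 0] fun v => G (0, v, E₀) := by
      filter_upwards [hslice.eventually hfix] with v hv
      simpa using hv
    have hg₁k : (fun v => g₁ (0, v)) =ᶠ[𝓝 0] k := by
      filter_upwards [hslice.eventually hdiff, hk, hgG.eventuallyEq_nhds] with v h1 h2 h3
      exact h1.hasDerivAt_slice.unique (h2.congr_of_eventuallyEq h3)
    exact (hg₁c.differentiableAt (by norm_num)).hasDerivAt_slice.unique
      (hk'.congr_of_eventuallyEq hg₁k)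
  have henergy : ∀ᶠ p in 𝓝 ((0 : ℝ), (0 : ℝ)),
      lam p.1 p.2 = E₀ + p.1 * u - p.1 ^ 2 * g p := by
    have ht : Tendsto (fun p : ℝ × ℝ => (p.1, p.2, E₀ + p.1 * u - p.1 ^ 2 * g p))
        (𝓝 (0, 0)) (𝓝 (0, 0, E₀)) := by
      have : ContinuousAt (fun p : ℝ × ℝ => (p.1, p.2, E₀ + p.1 * u - p.1 ^ 2 * g p)) (0, 0) := by
        have := hg.continuousAt
        fun_prop
      simpa [ContinuousAt] using this
    filter_upwards [ht.eventually hlam, hfix] with p h1 h2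
    exact h1 (by rw [← h2])
  have hall := henergy.and (hdiff.and
    ((hg₁c.eventually (by norm_num)).mono fun p hp => hp.differentiableAt (by norm_num)))
  obtain ⟨δ, hδ, hball⟩ := Metric.eventually_nhds_iff.1 hall
  have hloc : ∀ κ v : ℝ, |κ| < δ → |v| < δ → _ := fun κ v h1 h2 =>
    hball (y := (κ, v)) (by simpa [Prod.dist_eq] using ⟨h1, h2⟩)
  have hnear : ∀ v : ℝ, |v| < δ → ∀ᶠ w in 𝓝 v, |w| < δ := fun v hv =>
    (isOpen_lt continuous_abs continuous_const).mem_nhds hv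
  have hd1 : ∀ κ v : ℝ, |κ| < δ → |v| < δ →
      HasDerivAt (fun v => lam κ v) (-(κ ^ 2 * g₁ (κ, v))) v := by
    intro κ v hκ hv
    have h1 : (fun v => lam κ v) =ᶠ[𝓝 v] fun v => E₀ + κ * u - κ ^ 2 * g (κ, v) := by
      filter_upwards [hnear v hv] with w hw using (hloc κ w hκ hw).1
    exact (((hloc κ v hκ hv).2.1.hasDerivAt_slice.const_mul (κ ^ 2)).const_sub
      (E₀ + κ * u)).congr_of_eventuallyEq h1
  have hd2 : ∀ κ : ℝ, |κ| < δ →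
      HasDerivAt (deriv (fun v => lam κ v)) (-(κ ^ 2 * g₂ (κ, 0))) 0 := by
    intro κ hκ
    have h1 : deriv (fun v => lam κ v) =ᶠ[𝓝 0] fun v => -(κ ^ 2 * g₁ (κ, v)) := by
      filter_upwards [hnear 0 (by simpa using hδ)] with w hw using (hd1 κ w hκ hw).deriv
    exact ((hloc κ 0 hκ (by simpa using hδ)).2.2.hasDerivAt_slice.const_mul
      (κ ^ 2)).neg.congr_of_eventuallyEq h1
  refine ⟨δ, hδ, fun κ hκ => ⟨(hd1 κ 0 hκ (by simpa using hδ)).differentiableAt,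
    (hd2 κ hκ).differentiableAt⟩, ?_⟩
  have hO : (fun κ : ℝ => g₂ (κ, 0) - g₂ (0, 0)) =O[𝓝 0] fun κ : ℝ => κ := by
    have h1 : DifferentiableAt ℝ (fun κ : ℝ => g₂ (κ, 0)) 0 := by
      have h2 : DifferentiableAt ℝ g₂ ((0 : ℝ), (0 : ℝ)) := hg₂c.differentiableAt (by norm_num)
      exact DifferentiableAt.comp (g := g₂) (f := fun κ : ℝ => (κ, (0 : ℝ))) 0 h2 (by fun_prop)
    simpa using h1.isBigO_sub
  have hO' : (fun κ : ℝ => -(1 / 2) * (κ ^ 2 * (g₂ (κ, 0) - g₂ (0, 0)))) =O[𝓝 0]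
      fun κ : ℝ => κ ^ 3 := by
    refine (((isBigO_refl (fun κ : ℝ => κ ^ 2) _).mul hO).const_mul_left _).congr_right ?_
    intro κ; ring
  refine hO'.congr' ?_ EventuallyEq.rfl
  filter_upwards [hnear 0 (by simpa using hδ)] with κ hκ
  rw [(hd2 κ hκ).deriv, hg₂0]; ring

/-! ### The Feshbach–Schur reduction -/

section Operators

variable {V : Type*} [NormedAddCommGroup V] [InnerProductSpace ℂ V]

/-- `Q S Q + Π`, with `Π` the orthogonal projection onto the line of a unit vector `e` and
`Q = 1 - Π`: the operator acting as the compression of `S` on `e`'s orthogonal complement and as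
the identity on `e`. -/
noncomputable def reducedOp (e : V) (S : V →L[ℂ] V) : V →L[ℂ] V :=
  (1 - InnerProductSpace.rankOne ℂ e e) * S * (1 - InnerProductSpace.rankOne ℂ e e)
    + InnerProductSpace.rankOne ℂ e e

theorem reducedOp_apply (e : V) (S : V →L[ℂ] V) (x : V) :
    reducedOp e S x = S (x - ⟪e, x⟫_ℂ • e) - ⟪e, S (x - ⟪e, x⟫_ℂ • e)⟫_ℂ • e + ⟪e, x⟫_ℂ • e := by
  simp [reducedOp, inner_sub_right, inner_smul_right]

theorem inner_self_of_unit {e : V} (he : ‖e‖ = 1) : ⟪e, e⟫_ℂ = 1 := by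
  simp [inner_self_eq_norm_sq_to_K, he]

theorem inner_reducedOp {e : V} (he : ‖e‖ = 1) (S : V →L[ℂ] V) (x : V) :
    ⟪e, reducedOp e S x⟫_ℂ = ⟪e, x⟫_ℂ := by
  rw [reducedOp_apply, inner_add_right, inner_sub_right, inner_smul_right, inner_smul_right,
    inner_self_of_unit he]
  ring

theorem inner_reducedOp_self_of_orthogonal {e : V} (S : V →L[ℂ] V) {x : V} (hx : ⟪e, x⟫_ℂ = 0) :
    ⟪x, reducedOp e S x⟫_ℂ = ⟪x, S x⟫_ℂ := by
  have hx' : ⟪x, e⟫_ℂ = 0 := inner_eq_zero_symm.1 hx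
  rw [reducedOp_apply, hx]
  simp [hx']

theorem isUnit_reducedOp [FiniteDimensional ℂ V] {e : V} (he : ‖e‖ = 1) {S : V →L[ℂ] V} {c : ℝ}
    (hc : 0 < c) (hS : ∀ x, ⟪e, x⟫_ℂ = 0 → c * ‖x‖ ^ 2 ≤ (⟪x, S x⟫_ℂ).re) :
    IsUnit (reducedOp e S) := by
  have : CompleteSpace V := FiniteDimensional.complete ℂ V
  have hinj : Function.Injective (reducedOp e S) := by
    rw [injective_iff_map_eq_zero]
    intro x hx
    have h0 : ⟪e, x⟫_ℂ = 0 := by rw [← inner_reducedOp he S x, hx, inner_zero_right]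
    have h1 := hS x h0
    rw [← inner_reducedOp_self_of_orthogonal S h0, hx, inner_zero_right, Complex.zero_re] at h1
    have h2 : ‖x‖ ^ 2 ≤ 0 := by
      by_contra! h
      nlinarith [mul_pos hc h]
    exact norm_eq_zero.1 (pow_eq_zero_iff (two_ne_zero) |>.1 (le_antisymm h2 (sq_nonneg _)))
  rw [ContinuousLinearMap.isUnit_iff_bijective]
  exact ⟨hinj, (LinearMap.injective_iff_surjective (f := (reducedOp e S).toLinearMap)).1 hinj⟩

/-- Feshbach–Schur characterization of the lowest eigenvalue: if `T e = a e + κ w` with `w`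
orthogonal to `e`, if `T - μ` is strictly positive on `e`'s orthogonal complement, and if `μ` solves
the reduced scalar equation, then `μ` is the smallest eigenvalue of `T`. -/
theorem ground_energy_of_fixed_point [FiniteDimensional ℂ V] {e w : V} (he : ‖e‖ = 1)
    (hw : ⟪e, w⟫_ℂ = 0) {T : V →L[ℂ] V} (hT : ∀ x y, ⟪T x, y⟫_ℂ = ⟪x, T y⟫_ℂ) {a κ μ c : ℝ}
    (hTe : T e = a • e + κ • w) (hc : 0 < c)
    (hpos : ∀ x, ⟪e, x⟫_ℂ = 0 → c * ‖x‖ ^ 2 ≤ (⟪x, (T - μ • 1) x⟫_ℂ).re)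
    (hμ : μ = a - κ ^ 2 * (⟪w, Ring.inverse (reducedOp e (T - μ • 1)) w⟫_ℂ).re) :
    sInf {ν : ℝ | ∃ ψ : V, ψ ≠ 0 ∧ T ψ = (ν : ℂ) • ψ} = μ := by
  have hee := inner_self_of_unit he
  set S : V →L[ℂ] V := T - μ • 1 with hSdef
  have hSapp : ∀ x, S x = T x - (μ : ℂ) • x := fun x => by simp [hSdef]
  have hS : ∀ x y, ⟪S x, y⟫_ℂ = ⟪x, S y⟫_ℂ := fun x y => by
    simp [hSapp, hT]
  have hSe : S e = ((a - μ : ℝ) : ℂ) • e + (κ : ℂ) • w := by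
    rw [hSapp, hTe, ← Complex.coe_smul, ← Complex.coe_smul]
    push_cast
    module
  set y : V := Ring.inverse (reducedOp e S) w with hy
  have hDy : reducedOp e S y = w := by
    have := Ring.mul_inverse_cancel _ (isUnit_reducedOp he hc hpos)
    simpa [hy] using congrArg (fun A : V →L[ℂ] V => A w) this
  have hey : ⟪e, y⟫_ℂ = 0 := by rw [← inner_reducedOp he S y, hDy, hw]
  have hwy : ((⟪w, y⟫_ℂ).re : ℂ) = ⟪w, y⟫_ℂ := by
    rw [← Complex.conj_eq_iff_re, inner_conj_symm]
    conv_lhs => rw [← hDy, inner_reducedOp_self_of_orthogonal S hey]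
    rw [← hS, ← inner_conj_symm, ← inner_reducedOp_self_of_orthogonal S hey, hDy,
      inner_conj_symm]
  have heSy : ⟪e, S y⟫_ℂ = (κ : ℂ) * ⟪w, y⟫_ℂ := by
    rw [← hS, hSe, inner_add_left, inner_smul_left, inner_smul_left, hey]
    simp
  have hSy : S y = w + ((κ : ℂ) * ⟪w, y⟫_ℂ) • e := by
    have := hDy
    rw [reducedOp_apply, hey, zero_smul, sub_zero, add_zero, heSy] at this
    exact sub_eq_iff_eq_add.1 this
  -- The candidate eigenvector, normalized to have component `1` along `e`.
  set ψ : V := e - (κ : ℂ) • y with hψ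
  have hψe : ⟪e, ψ⟫_ℂ = 1 := by
    rw [hψ, inner_sub_right, inner_smul_right, hey, hee]; simp
  have hψ0 : ψ ≠ 0 := by
    intro h; rw [h, inner_zero_right] at hψe; exact zero_ne_one hψe
  have hSψ : S ψ = 0 := by
    have hcoef : ((a - μ : ℝ) : ℂ) = (κ : ℂ) * ((κ : ℂ) * ⟪w, y⟫_ℂ) := by
      rw [← hwy]
      have : a - μ = κ * (κ * (⟪w, y⟫_ℂ).re) := by linarith
      exact_mod_cast this
    rw [hψ, map_sub, map_smul, hSe, hSy, hcoef]
    module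
  refine IsLeast.csInf_eq ⟨⟨ψ, hψ0, ?_⟩, ?_⟩
  · rw [← sub_eq_zero, ← hSapp, hSψ]
  · rintro ν ⟨χ, hχ0, hχ⟩
    -- Modulo the null vector `ψ` of `S`, every vector is orthogonal to `e`.
    set x : V := χ - ⟪e, χ⟫_ℂ • ψ with hx
    have hex : ⟪e, x⟫_ℂ = 0 := by
      rw [hx, inner_sub_right, inner_smul_right, hψe]; ring
    have hSx : S x = S χ := by rw [hx, map_sub, map_smul, hSψ]; simp
    have hquad : ⟪x, S x⟫_ℂ = ⟪χ, S χ⟫_ℂ := by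
      rw [hSx, hx, inner_sub_left, inner_smul_left, ← hS ψ, hSψ]; simp
    have h1 : 0 ≤ (⟪χ, S χ⟫_ℂ).re := by
      rw [← hquad]; exact le_trans (by positivity) (hpos x hex)
    have h2 : (⟪χ, S χ⟫_ℂ).re = (ν - μ) * ‖χ‖ ^ 2 := by
      rw [hSapp, hχ, ← sub_smul, inner_smul_right, inner_self_eq_norm_sq_to_K]
      have : ((ν : ℂ) - μ) * ((‖χ‖ : ℂ)) ^ 2 = (((ν - μ) * ‖χ‖ ^ 2 : ℝ) : ℂ) := by push_cast; rfl
      exact (congrArg Complex.re this).trans (Complex.ofReal_re _)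
    rw [h2] at h1
    have h3 : 0 < ‖χ‖ ^ 2 := by positivity
    by_contra! h
    nlinarith [mul_pos (sub_pos.2 h) h3]

/-- The spectral gap on `e`'s orthogonal complement survives small perturbations. -/
theorem re_inner_pencil_ge {e : V} {H₀ U P : V →L[ℂ] V}
    {E₀ c : ℝ}
    (hgap : ∀ x, ⟪e, x⟫_ℂ = 0 → c * ‖x‖ ^ 2 ≤ (⟪x, (H₀ - E₀ • 1) x⟫_ℂ).re) (κ v μ : ℝ) (x : V)
    (hx : ⟪e, x⟫_ℂ = 0) :
    (c - |κ| * ‖U‖ - |v| * ‖P‖ - |μ - E₀|) * ‖x‖ ^ 2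
      ≤ (⟪x, (H₀ + κ • U - v • P - μ • 1) x⟫_ℂ).re := by
  set B : V →L[ℂ] V := κ • U - v • P - (μ - E₀) • 1 with hB
  have hsplit : H₀ + κ • U - v • P - μ • 1 = (H₀ - E₀ • 1) + B := by rw [hB]; module
  have h1 : ‖B x‖ ≤ (|κ| * ‖U‖ + |v| * ‖P‖ + |μ - E₀|) * ‖x‖ := by
    have e1 : B x = κ • U x - v • P x - (μ - E₀) • x := by simp [hB]
    rw [e1]
    refine (norm_sub_le _ _).trans ((add_le_add_left (norm_sub_le _ _) _).trans ?_)
    rw [norm_smul, norm_smul, norm_smul, Real.norm_eq_abs, Real.norm_eq_abs, Real.norm_eq_abs]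
    have := mul_le_mul_of_nonneg_left (U.le_opNorm x) (abs_nonneg κ)
    have := mul_le_mul_of_nonneg_left (P.le_opNorm x) (abs_nonneg v)
    linarith
  have h2 : |(⟪x, B x⟫_ℂ).re| ≤ ‖x‖ * ‖B x‖ :=
    (Complex.abs_re_le_norm _).trans (norm_inner_le_norm _ _)
  have h3 := (abs_le.1 h2).1
  have h4 := hgap x hx
  have h5 := mul_le_mul_of_nonneg_left h1 (norm_nonneg x)
  rw [hsplit, _root_.add_apply, inner_add_right, Complex.add_re]
  nlinarith

theorem hasDerivAt_ringInverse_comp {R : Type*} [NormedRing R] [NormedAlgebra ℝ R]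
    [CompleteSpace R] {D : ℝ → R} {D' : R} {v : ℝ} (hD : HasDerivAt D D' v) (hu : IsUnit (D v)) :
    HasDerivAt (fun t => Ring.inverse (D t))
      (-(Ring.inverse (D v) * D' * Ring.inverse (D v))) v := by
  obtain ⟨z, hz⟩ := hu
  have h := hasFDerivAt_ringInverse (𝕜 := ℝ) z
  rw [hz] at h
  have := h.comp_hasDerivAt v hD
  simpa [← hz, Function.comp_def] using this

/-- The expansion for the smallest eigenvalue of `H₀ + κU - vP`, with the coefficient expressed
through the reduced resolvent `R` of `H₀` at `E₀` (extended by the identity on `e`). Here `w` is the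
part of `U e` orthogonal to `e`. -/
theorem operator_expansion [FiniteDimensional ℂ V] {e w : V} (he : ‖e‖ = 1)
    {H₀ U P : V →L[ℂ] V} (hH₀ : ∀ x y, ⟪H₀ x, y⟫_ℂ = ⟪x, H₀ y⟫_ℂ)
    (hU : ∀ x y, ⟪U x, y⟫_ℂ = ⟪x, U y⟫_ℂ) (hP : ∀ x y, ⟪P x, y⟫_ℂ = ⟪x, P y⟫_ℂ)
    {E₀ c u : ℝ} (hc : 0 < c) (hHe : H₀ e = E₀ • e) (hPe : P e = 0)
    (hw : ⟪e, w⟫_ℂ = 0) (hUe : U e = u • e + w)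
    (hgap : ∀ x, ⟪e, x⟫_ℂ = 0 → c * ‖x‖ ^ 2 ≤ (⟪x, (H₀ - E₀ • 1) x⟫_ℂ).re)
    {lam : ℝ → ℝ → ℝ}
    (hlam : ∀ κ v, lam κ v =
      sInf {ν : ℝ | ∃ ψ : V, ψ ≠ 0 ∧ (H₀ + κ • U - v • P) ψ = (ν : ℂ) • ψ})
    {R : V →L[ℂ] V} (hR : R = Ring.inverse (reducedOp e (H₀ - E₀ • 1))) :
    ∃ δ > 0,
      (∀ κ : ℝ, |κ| < δ →
        DifferentiableAt ℝ (fun v => lam κ v) 0 ∧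
        DifferentiableAt ℝ (deriv (fun v => lam κ v)) 0) ∧
      (fun κ : ℝ => (1 / 2) * deriv (deriv (fun v => lam κ v)) 0
          + κ ^ 2 * (⟪w, (R * P * R * P * R) w⟫_ℂ).re) =O[𝓝 0] (fun κ : ℝ => κ ^ 3) := by
  have : CompleteSpace V := FiniteDimensional.complete ℂ V
  set D : ℝ × ℝ × ℝ → (V →L[ℂ] V) :=
    fun q => reducedOp e (H₀ + q.1 • U - q.2.1 • P - q.2.2 • 1) with hD
  have hDc : ContDiff ℝ 3 D := by
    simp only [hD, reducedOp]
    fun_prop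
  have hpos : ∀ᶠ q in 𝓝 ((0 : ℝ), (0 : ℝ), E₀), ∃ c' > 0, ∀ x, ⟪e, x⟫_ℂ = 0 →
      c' * ‖x‖ ^ 2 ≤ (⟪x, (H₀ + q.1 • U - q.2.1 • P - q.2.2 • 1) x⟫_ℂ).re := by
    have hcont : Continuous fun q : ℝ × ℝ × ℝ =>
        c - |q.1| * ‖U‖ - |q.2.1| * ‖P‖ - |q.2.2 - E₀| := by fun_prop
    have h0 : ∀ᶠ q in 𝓝 ((0 : ℝ), (0 : ℝ), E₀),
        0 < c - |q.1| * ‖U‖ - |q.2.1| * ‖P‖ - |q.2.2 - E₀| :=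
      hcont.continuousAt.eventually (lt_mem_nhds (by simpa using hc))
    filter_upwards [h0] with q hq
    exact ⟨_, hq, re_inner_pencil_ge hgap q.1 q.2.1 q.2.2⟩
  have hunit : ∀ᶠ q in 𝓝 ((0 : ℝ), (0 : ℝ), E₀), IsUnit (D q) := by
    filter_upwards [hpos] with q ⟨c', hc', h⟩ using isUnit_reducedOp he hc' h
  set L : (V →L[ℂ] V) →L[ℝ] ℝ := Complex.reCLM ∘L
    ((innerSL ℂ w ∘L ContinuousLinearMap.apply ℂ V w).restrictScalars ℝ) with hL
  have hLapp : ∀ A : V →L[ℂ] V, L A = (⟪w, A w⟫_ℂ).re := fun A => by simp [hL]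
  have hD0 : D (0, 0, E₀) = reducedOp e (H₀ - E₀ • 1) := by simp [hD]
  have hGc : ContDiffAt ℝ 3 (fun q => L (Ring.inverse (D q))) (0, 0, E₀) := by
    obtain ⟨z, hz⟩ := hunit.self_of_nhds
    have h1 := contDiffAt_ringInverse ℝ (n := 3) z
    rw [hz] at h1
    exact L.contDiff.contDiffAt.comp (0, 0, E₀) (h1.comp (0, 0, E₀) hDc.contDiffAt)
  -- `P` annihilates `e`, so it is its own compression.
  have hDv : ∀ v, D (0, v, E₀) = D (0, 0, E₀) - v • P := by
    intro v
    ext x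
    have h1 : ∀ z, ⟪e, P z⟫_ℂ = 0 := fun z => by rw [← hP, hPe, inner_zero_left]
    simp [hD, reducedOp_apply, map_sub, hPe, h1]
    abel
  have hDd : ∀ v, HasDerivAt (fun v => D (0, v, E₀)) (-P) v := by
    intro v
    rw [funext hDv]
    simpa using ((hasDerivAt_id v).smul_const P).const_sub (D (0, 0, E₀))
  have hslice : Tendsto (fun v : ℝ => ((0 : ℝ), v, E₀)) (𝓝 0) (𝓝 (0, 0, E₀)) :=
    Continuous.tendsto' (by fun_prop) _ _ rfl
  set I : ℝ → (V →L[ℂ] V) := fun v => Ring.inverse (D (0, v, E₀)) with hI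
  have hId : ∀ v, IsUnit (D (0, v, E₀)) → HasDerivAt I (I v * P * I v) v := by
    intro v hv
    simpa [hI] using hasDerivAt_ringInverse_comp (hDd v) hv
  have hI0 : I 0 = R := by rw [hI, hR, ← hD0]
  refine second_derivative_expansion (G := fun q => L (Ring.inverse (D q))) (E₀ := E₀) (u := u)
    (k := fun v => L (I v * P * I v)) hGc ?_ ?_ ?_
  · filter_upwards [hslice.eventually hunit] with v hv
    exact L.hasFDerivAt.comp_hasDerivAt v (hId v hv)
  · have h1 := hId 0 hunit.self_of_nhds
    have h2 := L.hasFDerivAt.comp_hasDerivAt 0 ((h1.mul_const P).mul h1)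
    refine h2.congr_deriv ?_
    rw [hI0, ← hLapp, map_add, two_mul]
    simp only [mul_assoc]
  · filter_upwards [hpos] with q ⟨c', hc', h⟩ hq
    rw [hlam]
    refine ground_energy_of_fixed_point (a := E₀ + q.1 * u) (κ := q.1) he hw ?_ ?_ hc' h ?_
    · intro x y
      simp only [_root_.add_apply, _root_.sub_apply,
        _root_.smul_apply, inner_add_left, inner_sub_left, inner_add_right,
        inner_sub_right, hH₀, ← Complex.coe_smul, inner_smul_left, inner_smul_right, hU, hP,
        Complex.conj_ofReal]
    · simp only [_root_.add_apply, _root_.sub_apply,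
        _root_.smul_apply, hHe, hPe, hUe]
      module
    · simpa only [hLapp] using hq

/-! ### The coefficient in the eigenbasis -/

theorem inner_resolvent_cubed [FiniteDimensional ℂ V] {ι : Type*} [Fintype ι] [DecidableEq ι]
    (b : OrthonormalBasis ι ℂ V) (i₀ : ι) {H₀ P : V →L[ℂ] V}
    (hH₀ : ∀ x y, ⟪H₀ x, y⟫_ℂ = ⟪x, H₀ y⟫_ℂ) (hP : ∀ x y, ⟪P x, y⟫_ℂ = ⟪x, P y⟫_ℂ)
    (hcomm : H₀ * P = P * H₀) {E : ι → ℝ} (heig : ∀ n, H₀ (b n) = E n • b n)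
    (hPe : P (b i₀) = 0) {c : ℝ} (hc : 0 < c)
    (hgap : ∀ x, ⟪b i₀, x⟫_ℂ = 0 → c * ‖x‖ ^ 2 ≤ (⟪x, (H₀ - E i₀ • 1) x⟫_ℂ).re)
    {R : V →L[ℂ] V} (hR : R = Ring.inverse (reducedOp (b i₀) (H₀ - E i₀ • 1))) (w : V) :
    (⟪w, (R * P * R * P * R) w⟫_ℂ).re
      = ∑ n ∈ Finset.univ.erase i₀, ‖⟪b n, P w⟫_ℂ‖ ^ 2 / (E n - E i₀) ^ 3 := by
  set A := reducedOp (b i₀) (H₀ - E i₀ • 1) with hA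
  have hbi : ∀ z, ⟪b i₀, P z⟫_ℂ = 0 := fun z => by rw [← hP, hPe, inner_zero_left]
  have hu : IsUnit A := isUnit_reducedOp (b.norm_eq_one i₀) hc hgap
  have hRA : R * A = 1 := by rw [hR, Ring.inverse_mul_cancel _ hu]
  have hAR : A * R = 1 := by rw [hR, Ring.mul_inverse_cancel _ hu]
  have hAP : A * P = P * A := by
    have h1 : ∀ z, P (H₀ z) = H₀ (P z) := fun z =>
      (congrArg (fun S : V →L[ℂ] V => S z) hcomm).symm
    ext z
    simp [hA, reducedOp_apply, hbi, hPe, h1]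
    simp [← h1, hbi]
  have hRP : R * P = P * R := by
    calc R * P = R * P * (A * R) := by rw [hAR, mul_one]
      _ = R * (P * A) * R := by simp only [mul_assoc]
      _ = (R * A) * P * R := by rw [← hAP]; simp only [mul_assoc]
      _ = P * R := by rw [hRA, one_mul]
  have hword : R * P * R * P * R = P * (R * R * R) * P := by
    calc R * P * R * P * R = (R * P) * R * (P * R) := by simp only [mul_assoc]
      _ = P * (R * R * R) * P := by rw [← hRP, hRP]; simp only [mul_assoc]; rw [hRP]
  have hAcoord : ∀ n, n ≠ i₀ → ∀ x, ⟪b n, A x⟫_ℂ = ((E n - E i₀ : ℝ) : ℂ) * ⟪b n, x⟫_ℂ := by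
    intro n hn x
    have h0 : ⟪b n, b i₀⟫_ℂ = 0 := by simp [b.inner_eq_ite, hn]
    have h1 : ∀ z, ⟪b n, H₀ z⟫_ℂ = (E n : ℂ) * ⟪b n, z⟫_ℂ := fun z => by
      rw [← hH₀, heig, ← Complex.coe_smul, inner_smul_left, Complex.conj_ofReal]
    rw [hA, reducedOp_apply, inner_add_right, inner_sub_right, inner_smul_right, inner_smul_right,
      h0, _root_.sub_apply, inner_sub_right, h1, _root_.smul_apply,
      ← Complex.coe_smul, inner_smul_right, _root_.one_apply_eq_self, inner_sub_right,
      inner_smul_right, h0]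
    push_cast; ring
  have hne : ∀ n, n ≠ i₀ → ((E n - E i₀ : ℝ) : ℂ) ≠ 0 := by
    intro n hn h
    have h0 : ⟪b i₀, b n⟫_ℂ = 0 := by simp [b.inner_eq_ite, Ne.symm hn]
    have h1 := hgap (b n) h0
    have h2 : (H₀ - E i₀ • 1) (b n) = ((E n - E i₀ : ℝ) : ℂ) • b n := by
      simp [heig, sub_smul]
    rw [h2, h, b.norm_eq_one] at h1
    simp at h1
    linarith
  have hRcoord : ∀ n, n ≠ i₀ → ∀ x, ⟪b n, R x⟫_ℂ = ⟪b n, x⟫_ℂ / ((E n - E i₀ : ℝ) : ℂ) := by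
    intro n hn x
    rw [eq_div_iff (hne n hn), mul_comm, ← hAcoord n hn]
    exact congrArg (fun S : V →L[ℂ] V => ⟪b n, S x⟫_ℂ) hAR
  have hterm : ⟪w, (R * P * R * P * R) w⟫_ℂ
      = ((∑ n ∈ Finset.univ.erase i₀, ‖⟪b n, P w⟫_ℂ‖ ^ 2 / (E n - E i₀) ^ 3 : ℝ) : ℂ) := by
    have h1 : ⟪w, (R * P * R * P * R) w⟫_ℂ = ⟪P w, R (R (R (P w)))⟫_ℂ := by
      rw [hword, hP]; rfl
    rw [h1, ← b.sum_inner_mul_inner, ← Finset.add_sum_erase _ _ (Finset.mem_univ i₀),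
      ← inner_conj_symm (P w) (b i₀), hbi, map_zero, zero_mul, zero_add, Complex.ofReal_sum]
    refine Finset.sum_congr rfl fun n hn => ?_
    have hn' := Finset.ne_of_mem_erase hn
    have h2 := hne n hn'
    rw [hRcoord n hn', hRcoord n hn', hRcoord n hn', ← inner_conj_symm (P w) (b n)]
    have h3 := Complex.conj_mul' ⟪b n, P w⟫_ℂ
    rw [Complex.ofReal_div, Complex.ofReal_pow, Complex.ofReal_pow, ← h3]
    field_simp
  rw [hterm, Complex.ofReal_re]

end Operators

/-! ### Matrices -/

/-- Finite-dimensional version of the paper's main perturbation result: with `H₀, U, P`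
Hermitian, `H₀P = PH₀`, orthonormal eigenbasis `Ω` of `H₀` with eigenvalues
`E 0 < E 1 ≤ … ≤ E (N-1)`, simple ground state `Ω₀` with `PΩ₀ = 0`, and `λ(κ,v)` the smallest
eigenvalue of `H₀ + κU - vP`, there is `δ > 0` such that for `|κ| < δ` the map `v ↦ λ(κ,v)` is
twice differentiable at `v = 0` and, as `κ → 0`,
`(1/2)∂²_v λ(κ,v)|₀ = -κ² Σ_{n≥1} |⟨Ωₙ, (UP - PU)Ω₀⟩|²/(Eₙ - E₀)³ + O(κ³)`. -/
theorem superfluid_fraction_second_order_coefficient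
    (N : ℕ) (hN : 0 < N) (H₀ U P : Matrix (Fin N) (Fin N) ℂ)
    (hH₀ : H₀.IsHermitian) (hU : U.IsHermitian) (hP : P.IsHermitian)
    (hcomm : H₀ * P = P * H₀)
    (E : Fin N → ℝ) (Ω : Fin N → EuclideanSpace ℂ (Fin N))
    (hON : Orthonormal ℂ Ω)
    (heig : ∀ n, Matrix.toEuclideanLin H₀ (Ω n) = (E n : ℂ) • Ω n)
    (hmono : Monotone E)
    (hsimple : ∀ n, n ≠ (⟨0, hN⟩ : Fin N) → E ⟨0, hN⟩ < E n)
    (hPΩ : Matrix.toEuclideanLin P (Ω ⟨0, hN⟩) = 0)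
    (lam : ℝ → ℝ → ℝ)
    (hlam : ∀ κ v, lam κ v = sInf {μ : ℝ | ∃ ψ : EuclideanSpace ℂ (Fin N), ψ ≠ 0 ∧
        Matrix.toEuclideanLin (H₀ + (κ : ℂ) • U - (v : ℂ) • P) ψ = (μ : ℂ) • ψ}) :
    ∃ δ > 0,
      (∀ κ : ℝ, |κ| < δ →
        DifferentiableAt ℝ (fun v => lam κ v) 0 ∧
        DifferentiableAt ℝ (deriv (fun v => lam κ v)) 0) ∧
      (fun κ : ℝ => (1 / 2) * deriv (deriv (fun v => lam κ v)) 0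
          + κ ^ 2 * ∑ n ∈ Finset.univ.erase (⟨0, hN⟩ : Fin N),
              ‖⟪Ω n, Matrix.toEuclideanLin (U * P - P * U) (Ω ⟨0, hN⟩)⟫_ℂ‖ ^ 2
                / (E n - E ⟨0, hN⟩) ^ 3)
        =O[nhds 0] (fun κ : ℝ => κ ^ 3) := by
  set i₀ : Fin N := ⟨0, hN⟩ with hi₀
  have hspan : ⊤ ≤ Submodule.span ℂ (Set.range Ω) := by
    rw [hON.linearIndependent.span_eq_top_of_card_eq_finrank' (by simp)]
  set b : OrthonormalBasis (Fin N) ℂ (EuclideanSpace ℂ (Fin N)) := .mk hON hspan with hb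
  have hbΩ : ⇑b = Ω := OrthonormalBasis.coe_mk hON hspan
  let Φ := Matrix.toEuclideanCLM (n := Fin N) (𝕜 := ℂ)
  have hΦ : ∀ (M : Matrix (Fin N) (Fin N) ℂ) x, Φ M x = Matrix.toEuclideanLin M x :=
    fun M x => rfl
  have hsym : ∀ {M : Matrix (Fin N) (Fin N) ℂ}, M.IsHermitian →
      ∀ x y, ⟪Φ M x, y⟫_ℂ = ⟪x, Φ M y⟫_ℂ :=
    fun hM => Matrix.isSymmetric_toEuclideanLin_iff.2 hM
  have hΦeig : ∀ n, Φ H₀ (b n) = E n • b n := fun n => by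
    rw [hΦ, hbΩ, heig, Complex.coe_smul]
  have hΦP : Φ P (b i₀) = 0 := by rw [hΦ, hbΩ, hPΩ]
  have he : ‖b i₀‖ = 1 := b.norm_eq_one i₀
  obtain ⟨c, hc, hcE⟩ : ∃ c : ℝ, 0 < c ∧ ∀ n, n ≠ i₀ → c ≤ E n - E i₀ := by
    have h1 : ∀ᶠ c : ℝ in 𝓝[>] 0, ∀ n, n ≠ i₀ → c ≤ E n - E i₀ := by
      refine eventually_all.2 fun n => ?_
      by_cases hn : n = i₀
      · simp [hn]
      · filter_upwards [nhdsWithin_le_nhds (gt_mem_nhds (sub_pos.2 (hsimple n hn)))] with c h _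
          using le_of_lt h
    obtain ⟨c, h, hc⟩ := (h1.and self_mem_nhdsWithin).exists
    exact ⟨c, hc, h⟩
  have hgap : ∀ x, ⟪b i₀, x⟫_ℂ = 0 → c * ‖x‖ ^ 2 ≤ (⟪x, (Φ H₀ - E i₀ • 1) x⟫_ℂ).re := by
    intro x hx
    have h1 : ∀ n, ⟪b n, (Φ H₀ - E i₀ • 1) x⟫_ℂ = ((E n - E i₀ : ℝ) : ℂ) * ⟪b n, x⟫_ℂ := by
      intro n
      rw [_root_.sub_apply, inner_sub_right, ← hsym hH₀, hΦeig, _root_.smul_apply,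
        ← Complex.coe_smul, ← Complex.coe_smul, inner_smul_left, inner_smul_right,
        Complex.conj_ofReal, _root_.one_apply_eq_self]
      push_cast; ring
    rw [← b.sum_inner_mul_inner, ← b.sum_sq_norm_inner_right, Finset.mul_sum, Complex.re_sum]
    refine Finset.sum_le_sum fun n _ => ?_
    have h2 : ⟪x, b n⟫_ℂ * ⟪b n, (Φ H₀ - E i₀ • 1) x⟫_ℂ
        = (((E n - E i₀) * ‖⟪b n, x⟫_ℂ‖ ^ 2 : ℝ) : ℂ) := by
      rw [h1, ← inner_conj_symm x (b n), mul_left_comm, Complex.conj_mul']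
      push_cast; ring
    rw [h2, Complex.ofReal_re]
    by_cases hn : n = i₀
    · rw [hn, hx]; simp
    · exact mul_le_mul_of_nonneg_right (hcE n hn) (sq_nonneg _)
  set u : ℝ := (⟪b i₀, Φ U (b i₀)⟫_ℂ).re with hu
  have hu' : (u : ℂ) = ⟪b i₀, Φ U (b i₀)⟫_ℂ := by
    rw [hu, ← Complex.conj_eq_iff_re, inner_conj_symm, hsym hU]
  set w := Φ U (b i₀) - u • b i₀ with hw
  have hew : ⟪b i₀, w⟫_ℂ = 0 := by
    rw [hw, inner_sub_right, ← Complex.coe_smul, inner_smul_right, inner_self_of_unit he, hu']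
    ring
  have hPw : ∀ n, ‖⟪b n, Φ P w⟫_ℂ‖ = ‖⟪Ω n, Matrix.toEuclideanLin (U * P - P * U) (Ω i₀)⟫_ℂ‖ := by
    intro n
    have h1 : Matrix.toEuclideanLin (U * P - P * U) (Ω i₀) = -(Φ P w) := by
      rw [← hΦ, ← hbΩ, map_sub, map_mul, map_mul, hw, map_sub, ← Complex.coe_smul, map_smul, hΦP]
      simp [hΦP]
    rw [h1, hbΩ, inner_neg_right, norm_neg]
  -- The same operators, with the real parameters acting through the real scalar multiplication.
  have hlam' : ∀ κ v, lam κ v = sInf {ν : ℝ | ∃ ψ : EuclideanSpace ℂ (Fin N), ψ ≠ 0 ∧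
      (Φ H₀ + κ • Φ U - v • Φ P) ψ = (ν : ℂ) • ψ} := by
    intro κ v
    have h1 : Φ H₀ + κ • Φ U - v • Φ P = Φ (H₀ + (κ : ℂ) • U - (v : ℂ) • P) := by
      rw [map_sub, map_add, map_smul, map_smul]
      ext1 x
      simp
    rw [hlam, h1]
    rfl
  have hmain := operator_expansion he (hsym hH₀) (hsym hU) (hsym hP) hc (hΦeig i₀) hΦP hew
    (u := u) (by rw [hw]; abel) hgap hlam' rfl
  rw [inner_resolvent_cubed b i₀ (hsym hH₀) (hsym hP) (by rw [← map_mul, hcomm, map_mul]) hΦeig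
    hΦP hc hgap rfl] at hmain
  simpa only [hPw] using hmain
end
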